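/- Let n ≥ 4 be an integer and let μ₂ be the admissible diffusive profile. Then y^{δ−2}(μ₂(y) − λ y^{−δ}) → λ₀ as y → 0⁺, where λ₀ = (λ/(2κ)) · (−2n κ₃ δ(δ+1) − κ(δ − 2ε)) / ((n−1)δ(δ+1) + 2(2δ−1)) with κ₃ = −κ/12, and λ₀ > 0; moreover there exists λ₁ ≠ 0 such that y^{δ−4}(μ₂(y) − λ y^{−δ} − λ₀ y^{2−δ}) → λ₁ as y → 0⁺. -/

import Mathlib

noncomputable def kap : ℝ := 1 / Real.sqrt Real.pi

noncomputable def kap3 : ℝ := -kap / 12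

noncomputable def eps (n : ℕ) : ℝ := 1 / ((n : ℝ) - 1)

noncomputable def del (n : ℕ) : ℝ := ((n : ℝ) + 2) / ((n : ℝ) - 1)

noncomputable def lam (n : ℕ) : ℝ :=
  (del n * (del n + 1) / (2 * kap) ^ n) ^ (1 / ((n : ℝ) - 1))

noncomputable def lam0 (n : ℕ) : ℝ :=
  (lam n / (2 * kap)) *
    (-2 * (n : ℝ) * kap3 * del n * (del n + 1) - kap * (del n - 2 * eps n)) /
    (((n : ℝ) - 1) * del n * (del n + 1) + 2 * (2 * del n - 1))

noncomputable def mu1 (y : ℝ) : ℝ :=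
  (2 / Real.sqrt Real.pi) * ∫ σ in (0:ℝ)..(y / 2), Real.exp (-σ ^ 2)

def IsDiffusiveProfile (n : ℕ) (μ : ℝ → ℝ) : Prop :=
  ContDiffOn ℝ 2 μ (Set.Ioi 0) ∧
  (∀ y ∈ Set.Ioi (0:ℝ), 0 < μ y) ∧
  (∀ y ∈ Set.Ioi (0:ℝ),
    deriv (deriv μ) y + y / 2 * deriv μ y + eps n * μ y = (2 * mu1 y * μ y) ^ n) ∧
  Filter.Tendsto (fun y : ℝ => y ^ del n * μ y) (nhdsWithin 0 (Set.Ioi 0)) (nhds (lam n)) ∧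
  Filter.Tendsto (fun y : ℝ => y ^ (2 * eps n) * μ y) Filter.atTop (nhds 0)

/-!
Put `w = y ^ δ μ₂ / λ` and `g = μ₁ / (κ y) = 1 - y² / 12 + y⁴ / 160 + O(y⁶)`. Since
`n δ = n + 2 + δ` and `(2 κ λ) ^ n = δ (δ + 1) λ`, the profile equation becomes
`y² w'' + y (y² / 2 - 2 δ) w' + (δ (δ + 1) + (ε - δ / 2) y²) w = δ (δ + 1) (g w) ^ n`,
with `w → 1` at the origin. Matching coefficients gives `P = 1 + α y² + β y⁴` which solves this
equation up to `O(y⁶)`. The difference `w - P` then solves a linear equation of Euler type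
`y² v'' + y p v' = q v + O(y⁶)` with `p → -2 δ` and `q → (n - 1) δ (δ + 1) > 0`. Because the
exponent `6` lies strictly between the two roots `s` of `s (s - 1) - 2 δ s = (n - 1) δ (δ + 1)`,
the function `K y⁶` is a barrier, and the maximum principle yields `w - P = O(y⁶)`. Hence
`λ₀ = λ α` and `λ₁ = λ β`. Up to a nonzero factor `β` is the value at `n` of an integer polynomial
without roots modulo `17`, so it never vanishes.
-/

open Filter Topology Set Asymptotics

theorem second_deriv_nonpos_of_isLocalMax {f f' : ℝ → ℝ} {f'' x : ℝ} (hmax : IsLocalMax f x)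
    (hf : ∀ᶠ t in 𝓝 x, HasDerivAt f (f' t) t) (hf' : HasDerivAt f' f'' x) : f'' ≤ 0 := by
  have hderiv : deriv f =ᶠ[𝓝 x] f' := hf.mono fun t ht => ht.deriv
  have hsecond : deriv (deriv f) x = f'' := hderiv.deriv_eq.trans hf'.deriv
  by_contra! hpos
  have hmin : IsLocalMin f x := isLocalMin_of_deriv_deriv_pos (hsecond ▸ hpos)
    hmax.deriv_eq_zero hf.self_of_nhds.continuousAt
  have hconst : f =ᶠ[𝓝 x] fun _ => f x := by
    filter_upwards [hmax, hmin] with t h₁ h₂ using le_antisymm h₁ h₂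
  have hzero : deriv (deriv f) x = 0 := by simpa using hconst.deriv.deriv_eq
  exact hpos.ne' (hsecond.symm.trans hzero)

theorem exists_pos_isLocalMax {z : ℝ → ℝ} {a b y : ℝ} (hz : ContinuousOn z (Ioc a b))
    (hleft : ∀ᶠ t in 𝓝[>] a, z t ≤ 0) (hright : z b ≤ 0) (hy : y ∈ Ioc a b) (hzy : 0 < z y) :
    ∃ t ∈ Ioo a b, 0 < z t ∧ IsLocalMax z t := by
  obtain ⟨c, hc, hac, hcy⟩ : ∃ c, z c ≤ 0 ∧ a < c ∧ c < y :=
    (hleft.and (Ioo_mem_nhdsGT hy.1)).exists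
  obtain ⟨t, ht, hmax⟩ := isCompact_Icc.exists_isMaxOn ⟨y, hcy.le, hy.2⟩
    (hz.mono (Icc_subset_Ioc_left hac))
  have hzt : 0 < z t := hzy.trans_le (hmax ⟨hcy.le, hy.2⟩)
  have hct : c < t := ht.1.lt_of_ne (by rintro rfl; exact hzt.not_ge hc)
  have htb : t < b := ht.2.lt_of_ne (by rintro rfl; exact hzt.not_ge hright)
  exact ⟨t, ⟨hac.trans hct, htb⟩, hzt, hmax.isLocalMax (Icc_mem_nhds hct htb)⟩

theorem weak_maximum_principle {z z' z'' p q : ℝ → ℝ} {a b : ℝ}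
    (hz : ∀ y ∈ Ioc a b, HasDerivAt z (z' y) y) (hz' : ∀ y ∈ Ioo a b, HasDerivAt z' (z'' y) y)
    (hq : ∀ y ∈ Ioo a b, 0 ≤ q y)
    (hsub : ∀ y ∈ Ioo a b, q y * z y < y ^ 2 * z'' y + y * p y * z' y)
    (hleft : ∀ᶠ y in 𝓝[>] a, z y ≤ 0) (hright : z b ≤ 0) :
    ∀ y ∈ Ioc a b, z y ≤ 0 := by
  intro y hy
  by_contra! hzy
  obtain ⟨t, ht, hzt, hmax⟩ := exists_pos_isLocalMax
    (fun s hs => (hz s hs).continuousAt.continuousWithinAt) hleft hright hy hzy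
  have hfirst : z' t = 0 := hmax.hasDerivAt_eq_zero (hz t (Ioo_subset_Ioc_self ht))
  have hsecond : z'' t ≤ 0 := second_deriv_nonpos_of_isLocalMax hmax
    (eventually_of_mem (isOpen_Ioo.mem_nhds ht) fun s hs => hz s (Ioo_subset_Ioc_self hs))
    (hz' t ht)
  have hlt := hsub t ht
  rw [hfirst, mul_zero, add_zero] at hlt
  exact ((mul_nonneg (hq t ht) hzt.le).trans_lt hlt).not_ge
    (mul_nonpos_of_nonneg_of_nonpos (sq_nonneg t) hsecond)

section EulerOperator

variable {v v' v'' p q f : ℝ → ℝ} {s b K : ℝ}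

theorem le_mul_rpow_of_euler_ode
    (hv : ∀ y ∈ Ioc 0 b, HasDerivAt v (v' y) y) (hv' : ∀ y ∈ Ioo 0 b, HasDerivAt v' (v'' y) y)
    (hode : ∀ y ∈ Ioo 0 b, y ^ 2 * v'' y + y * p y * v' y = q y * v y + f y)
    (hq : ∀ y ∈ Ioo 0 b, 0 < q y)
    (hbarrier : ∀ y ∈ Ioo 0 b, -f y ≤ K * (q y - s * (s - 1) - s * p y) * y ^ s)
    (hlim : Tendsto v (𝓝[>] 0) (𝓝 0)) (hK : 0 ≤ K) (hvb : v b ≤ K * b ^ s) :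
    ∀ y ∈ Ioc 0 b, v y ≤ K * y ^ s := by
  -- The constant `η` makes the inequality for the barrier `K y ^ s + η` strict, at `0` as well.
  suffices h : ∀ η > 0, ∀ y ∈ Ioc 0 b, v y - (K * y ^ s + η) ≤ 0 from fun y hy =>
    le_of_forall_pos_le_add fun η hη => sub_nonpos.1 (h η hη y hy)
  intro η hη
  have hrpow : ∀ r y : ℝ, 0 < y → HasDerivAt (fun t : ℝ => t ^ r) (r * y ^ (r - 1)) y :=
    fun r y hy => Real.hasDerivAt_rpow_const (Or.inl hy.ne')
  refine weak_maximum_principle (p := p) (q := q)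
    (z' := fun y => v' y - K * (s * y ^ (s - 1)))
    (z'' := fun y => v'' y - K * (s * ((s - 1) * y ^ (s - 1 - 1))))
    (fun y hy => (hv y hy).sub (((hrpow s y hy.1).const_mul K).add_const η))
    (fun y hy => (hv' y hy).sub (((hrpow (s - 1) y hy.1).const_mul s).const_mul K))
    (fun y hy => (hq y hy).le) ?_ ?_ (by linarith)
  · intro y hy
    have hyp : 0 < y := hy.1
    rw [Real.rpow_sub_one hyp.ne', Real.rpow_sub_one hyp.ne', ← sub_pos]
    calc 0 < f y + K * (q y - s * (s - 1) - s * p y) * y ^ s + q y * η :=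
          add_pos_of_nonneg_of_pos (by linarith [hbarrier y hy]) (mul_pos (hq y hy) hη)
      _ = _ := by
          field_simp
          linear_combination -hode y hy
  · filter_upwards [hlim.eventually_lt_const hη, self_mem_nhdsWithin] with y hvy hy
    have : 0 ≤ K * y ^ s := mul_nonneg hK (Real.rpow_nonneg (mem_Ioi.1 hy).le s)
    linarith

theorem abs_le_mul_rpow_of_euler_ode
    (hv : ∀ y ∈ Ioc 0 b, HasDerivAt v (v' y) y) (hv' : ∀ y ∈ Ioo 0 b, HasDerivAt v' (v'' y) y)
    (hode : ∀ y ∈ Ioo 0 b, y ^ 2 * v'' y + y * p y * v' y = q y * v y + f y)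
    (hq : ∀ y ∈ Ioo 0 b, 0 < q y)
    (hbarrier : ∀ y ∈ Ioo 0 b, |f y| ≤ K * (q y - s * (s - 1) - s * p y) * y ^ s)
    (hlim : Tendsto v (𝓝[>] 0) (𝓝 0)) (hK : 0 ≤ K) (hvb : |v b| ≤ K * b ^ s) :
    ∀ y ∈ Ioc 0 b, |v y| ≤ K * y ^ s := by
  intro y hy
  refine abs_le'.2 ⟨?_, ?_⟩
  · exact le_mul_rpow_of_euler_ode hv hv' hode hq
      (fun t ht => (neg_le_abs _).trans (hbarrier t ht)) hlim hK ((le_abs_self _).trans hvb) y hy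
  · exact le_mul_rpow_of_euler_ode (v := fun t => -v t) (f := fun t => -f t)
      (fun t ht => (hv t ht).neg) (fun t ht => (hv' t ht).neg)
      (fun t ht => by linear_combination -hode t ht) hq
      (fun t ht => (neg_neg (f t)).le.trans ((le_abs_self _).trans (hbarrier t ht)))
      (by simpa using hlim.neg) hK ((neg_le_abs _).trans hvb) y hy

theorem isBigO_rpow_of_euler_ode {p₀ q₀ : ℝ}
    (hv : ∀ᶠ y in 𝓝[>] 0, HasDerivAt v (v' y) y) (hv' : ∀ᶠ y in 𝓝[>] 0, HasDerivAt v' (v'' y) y)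
    (hode : ∀ᶠ y in 𝓝[>] 0, y ^ 2 * v'' y + y * p y * v' y = q y * v y + f y)
    (hp : Tendsto p (𝓝[>] 0) (𝓝 p₀)) (hq : Tendsto q (𝓝[>] 0) (𝓝 q₀)) (hq₀ : 0 < q₀)
    (hgap : s * (s - 1) + s * p₀ < q₀) (hf : f =O[𝓝[>] 0] fun y => y ^ s)
    (hlim : Tendsto v (𝓝[>] 0) (𝓝 0)) :
    v =O[𝓝[>] 0] fun y => y ^ s := by
  obtain ⟨r, hr, hr'⟩ : ∃ r, 0 < r ∧ r < q₀ - s * (s - 1) - s * p₀ :=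
    exists_between (by linarith)
  obtain ⟨C, hC, hfC⟩ := hf.exists_pos
  have hgap_lim : Tendsto (fun y => q y - s * (s - 1) - s * p y) (𝓝[>] 0)
      (𝓝 (q₀ - s * (s - 1) - s * p₀)) := (hq.sub_const _).sub (hp.const_mul s)
  obtain ⟨b, hb : 0 < b, hloc⟩ := mem_nhdsGT_iff_exists_Ioc_subset.1 <|
    ((hv.and hv').and (hode.and (hq.eventually_const_lt hq₀))).and
      ((hgap_lim.eventually_const_lt hr').and hfC.bound)
  set K := max (C / r) (|v b| / b ^ s)
  have hK : 0 ≤ K := le_max_of_le_left (by positivity)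
  have hCK : C ≤ K * r := (div_le_iff₀ hr).1 (le_max_left _ _)
  have hvb : |v b| ≤ K * b ^ s := (div_le_iff₀ (by positivity)).1 (le_max_right _ _)
  have hbarrier : ∀ y ∈ Ioo 0 b, |f y| ≤ K * (q y - s * (s - 1) - s * p y) * y ^ s := by
    intro y hy
    obtain ⟨-, hgap_y, hf_y⟩ := hloc (Ioo_subset_Ioc_self hy)
    have hys : 0 ≤ y ^ s := Real.rpow_nonneg hy.1.le s
    calc |f y| ≤ C * y ^ s := by simpa only [Real.norm_eq_abs, abs_of_nonneg hys] using hf_y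
      _ ≤ K * r * y ^ s := by gcongr
      _ ≤ _ := by gcongr
  refine IsBigO.of_bound K ?_
  filter_upwards [Ioc_mem_nhdsGT hb] with y hy
  rw [Real.norm_eq_abs, Real.norm_eq_abs, abs_of_nonneg (Real.rpow_nonneg hy.1.le s)]
  exact abs_le_mul_rpow_of_euler_ode (fun t ht => (hloc ht).1.1.1)
    (fun t ht => (hloc (Ioo_subset_Ioc_self ht)).1.1.2)
    (fun t ht => (hloc (Ioo_subset_Ioc_self ht)).1.2.1)
    (fun t ht => (hloc (Ioo_subset_Ioc_self ht)).1.2.2) hbarrier hlim hK hvb y hy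

end EulerOperator

theorem tendsto_nhdsGT_zero_of_continuous {f : ℝ → ℝ} {c : ℝ} (hf : Continuous f)
    (h₀ : f 0 = c) : Tendsto f (𝓝[>] 0) (𝓝 c) :=
  h₀ ▸ hf.continuousAt.mono_left nhdsWithin_le_nhds

/-- The even quartic polynomial with constant term `1` that truncates the expansion at the origin
of an even function with value `1` there. -/
def evenQuartic (α β y : ℝ) : ℝ := 1 + α * y ^ 2 + β * y ^ 4

/-- The expansion `u y = 1 + α y² + β y⁴ + O(y⁶)` as `y → 0⁺`. The leading coefficient is fixed
to be `1`, and the error has order `6`, as for an even function. -/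
def HasEvenExpansion (u : ℝ → ℝ) (α β : ℝ) : Prop :=
  (fun y => u y - evenQuartic α β y) =O[𝓝[>] 0] fun y => y ^ 6

theorem continuous_evenQuartic (α β : ℝ) : Continuous (evenQuartic α β) := by
  unfold evenQuartic
  fun_prop

theorem tendsto_evenQuartic (α β : ℝ) : Tendsto (evenQuartic α β) (𝓝[>] 0) (𝓝 1) :=
  tendsto_nhdsGT_zero_of_continuous (continuous_evenQuartic α β) (by simp [evenQuartic])

theorem hasDerivAt_evenQuartic (α β y : ℝ) :
    HasDerivAt (evenQuartic α β) (2 * α * y + 4 * β * y ^ 3) y := by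
  refine ((((hasDerivAt_pow 2 y).const_mul α).const_add 1).add
    ((hasDerivAt_pow 4 y).const_mul β)).congr_deriv ?_
  push_cast
  ring

theorem hasDerivAt_deriv_evenQuartic (α β y : ℝ) :
    HasDerivAt (fun t => 2 * α * t + 4 * β * t ^ 3) (2 * α + 12 * β * y ^ 2) y := by
  refine (((hasDerivAt_id y).const_mul (2 * α)).add
    ((hasDerivAt_pow 3 y).const_mul (4 * β))).congr_deriv ?_
  push_cast
  ring

theorem hasEvenExpansion_evenQuartic (α β : ℝ) : HasEvenExpansion (evenQuartic α β) α β := by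
  simpa only [HasEvenExpansion, sub_self] using isBigO_zero _ _

namespace HasEvenExpansion

variable {u v : ℝ → ℝ} {α β γ ζ : ℝ}

theorem tendsto_one (hu : HasEvenExpansion u α β) : Tendsto u (𝓝[>] 0) (𝓝 1) := by
  have hzero : Tendsto (fun y : ℝ => y ^ 6) (𝓝[>] 0) (𝓝 0) :=
    tendsto_nhdsGT_zero_of_continuous (continuous_pow 6) (by simp)
  simpa using (hu.trans_tendsto hzero).add (tendsto_evenQuartic α β)

theorem mul (hu : HasEvenExpansion u α β) (hv : HasEvenExpansion v γ ζ) :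
    HasEvenExpansion (fun y => u y * v y) (α + γ) (β + α * γ + ζ) := by
  have hfirst := IsBigO.mul hu (hv.tendsto_one.isBigO_one ℝ)
  have hsecond := ((tendsto_evenQuartic α β).isBigO_one ℝ).mul hv
  have htail : Tendsto (fun y : ℝ => α * ζ + β * γ + β * ζ * y ^ 2) (𝓝[>] 0)
      (𝓝 (α * ζ + β * γ)) :=
    tendsto_nhdsGT_zero_of_continuous (by fun_prop) (by simp)
  have hhigher := (htail.isBigO_one ℝ).mul (isBigO_refl (fun y : ℝ => y ^ 6) (𝓝[>] 0))
  simp only [mul_one, one_mul] at hfirst hsecond hhigher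
  refine ((hfirst.add hsecond).add hhigher).congr_left fun y => ?_
  simp only [evenQuartic]
  ring

theorem pow (hu : HasEvenExpansion u α β) (n : ℕ) :
    HasEvenExpansion (fun y => u y ^ n) (n * α) (n * β + n * (n - 1) / 2 * α ^ 2) := by
  induction n with
  | zero => simpa [HasEvenExpansion, evenQuartic] using isBigO_zero _ _
  | succ k ih =>
    have hmul := ih.mul hu
    simp only [← pow_succ] at hmul
    convert hmul using 1 <;> push_cast <;> ring

theorem tendsto_remainder_div (hu : HasEvenExpansion u α β) :
    Tendsto (fun y => (u y - evenQuartic α β y) / y ^ 4) (𝓝[>] 0) (𝓝 0) :=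
  (hu.trans_isLittleO <| (isLittleO_pow_pow (by norm_num)).mono
    nhdsWithin_le_nhds).tendsto_div_nhds_zero

theorem tendsto_fourth_coeff (hu : HasEvenExpansion u α β) :
    Tendsto (fun y => (u y - 1 - α * y ^ 2) / y ^ 4) (𝓝[>] 0) (𝓝 β) := by
  have hsum := hu.tendsto_remainder_div.const_add β
  rw [add_zero] at hsum
  refine hsum.congr' (eventually_mem_nhdsWithin.mono fun y (hy : 0 < y) => ?_)
  simp only [evenQuartic]
  field_simp
  ring

theorem tendsto_second_coeff (hu : HasEvenExpansion u α β) :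
    Tendsto (fun y => (u y - 1) / y ^ 2) (𝓝[>] 0) (𝓝 α) := by
  have hsq : Tendsto (fun y : ℝ => y ^ 2) (𝓝[>] 0) (𝓝 0) :=
    tendsto_nhdsGT_zero_of_continuous (continuous_pow 2) (by simp)
  have hsum := (hsq.mul hu.tendsto_fourth_coeff).const_add α
  rw [zero_mul, add_zero] at hsum
  refine hsum.congr' (eventually_mem_nhdsWithin.mono fun y (hy : 0 < y) => ?_)
  field_simp
  ring

end HasEvenExpansion

section NormalizedEquation

theorem tendsto_geom_sum₂ {ι R : Type*} [CommSemiring R] [TopologicalSpace R] [ContinuousAdd R]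
    [ContinuousMul R] {l : Filter ι} {f g : ι → R} {x : R} (hf : Tendsto f l (𝓝 x))
    (hg : Tendsto g l (𝓝 x)) (n : ℕ) :
    Tendsto (fun i => ∑ k ∈ Finset.range n, f i ^ k * g i ^ (n - 1 - k)) l
      (𝓝 (n * x ^ (n - 1))) :=
  geom_sum₂_self x n ▸ tendsto_finsetSum _ fun k _ => (hf.pow k).mul (hg.pow (n - 1 - k))

variable {n : ℕ} {d e a b α β : ℝ} {g : ℝ → ℝ}

theorem isBigO_residual_evenQuartic (hg : HasEvenExpansion g a b)
    (hα : (2 - d) * (1 - d) * α + (e - d / 2) = d * (d + 1) * (n * (a + α)))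
    (hβ : (4 - d) * (3 - d) * β + (e - d / 2 + 1) * α =
      d * (d + 1) * (n * (b + a * α + β) + n * (n - 1) / 2 * (a + α) ^ 2)) :
    (fun y => y ^ 2 * (2 * α + 12 * β * y ^ 2) +
        y * (y ^ 2 / 2 - 2 * d) * (2 * α * y + 4 * β * y ^ 3) +
        (d * (d + 1) + (e - d / 2) * y ^ 2) * evenQuartic α β y -
        d * (d + 1) * (g y * evenQuartic α β y) ^ n)
      =O[𝓝[>] 0] fun y => y ^ 6 := by
  have hpow : HasEvenExpansion _ _ _ := (hg.mul (hasEvenExpansion_evenQuartic α β)).pow n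
  have htail := (isBigO_refl (fun y : ℝ => y ^ 6) (𝓝[>] 0)).const_mul_left
    ((e - d / 2 + 2) * β)
  refine ((hpow.const_mul_left (-(d * (d + 1)))).add htail).congr_left fun y => ?_
  simp only [evenQuartic]
  linear_combination -(y ^ 2) * hα - y ^ 4 * hβ

theorem hasEvenExpansion_of_normalized_ode {w w' w'' : ℝ → ℝ} (hg : HasEvenExpansion g a b)
    (hw : ∀ᶠ y in 𝓝[>] 0, HasDerivAt w (w' y) y) (hw' : ∀ᶠ y in 𝓝[>] 0, HasDerivAt w' (w'' y) y)
    (hode : ∀ᶠ y in 𝓝[>] 0, y ^ 2 * w'' y + y * (y ^ 2 / 2 - 2 * d) * w' y +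
      (d * (d + 1) + (e - d / 2) * y ^ 2) * w y = d * (d + 1) * (g y * w y) ^ n)
    (hlim : Tendsto w (𝓝[>] 0) (𝓝 1))
    (hpos : 0 < (n - 1) * (d * (d + 1))) (hgap : (6 - d) * (5 - d) < n * (d * (d + 1)))
    (hα : (2 - d) * (1 - d) * α + (e - d / 2) = d * (d + 1) * (n * (a + α)))
    (hβ : (4 - d) * (3 - d) * β + (e - d / 2 + 1) * α =
      d * (d + 1) * (n * (b + a * α + β) + n * (n - 1) / 2 * (a + α) ^ 2)) :
    HasEvenExpansion w α β := by
  set P := evenQuartic α β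
  -- `w ^ n - P ^ n = S * (w - P)` makes the equation for `w - P` linear, with `S → n`.
  set S : ℝ → ℝ := fun y => ∑ i ∈ Finset.range n, w y ^ i * P y ^ (n - 1 - i)
  set q : ℝ → ℝ := fun y => d * (d + 1) * (g y ^ n * S y - 1) - (e - d / 2) * y ^ 2
  have hfactor (y : ℝ) : S y * (w y - P y) = w y ^ n - P y ^ n :=
    (Commute.all (w y) (P y)).geom_sum₂_mul n
  have hP : Tendsto P (𝓝[>] 0) (𝓝 1) := tendsto_evenQuartic α β
  have hS_lim : Tendsto S (𝓝[>] 0) (𝓝 n) := by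
    simpa only [one_pow, mul_one] using tendsto_geom_sum₂ hlim hP n
  have hsq (c : ℝ) : Tendsto (fun y => c * y ^ 2) (𝓝[>] 0) (𝓝 0) :=
    tendsto_nhdsGT_zero_of_continuous (by fun_prop) (by simp)
  have hp_lim : Tendsto (fun y : ℝ => y ^ 2 / 2 - 2 * d) (𝓝[>] 0) (𝓝 (-2 * d)) :=
    tendsto_nhdsGT_zero_of_continuous (by fun_prop) (by simp)
  have hq_lim : Tendsto q (𝓝[>] 0) (𝓝 ((n - 1) * (d * (d + 1)))) := by
    convert ((((hg.tendsto_one.pow n).mul hS_lim).sub_const 1).const_mul (d * (d + 1))).sub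
      (hsq (e - d / 2)) using 2
    ring
  have hresidual := (isBigO_residual_evenQuartic (d := d) (e := e) hg hα hβ).neg_left
  simp only [← Real.rpow_ofNat _ 6] at hresidual
  have hbigO := isBigO_rpow_of_euler_ode (v := fun y => w y - P y) (s := 6)
    (hw.mono fun y hy => hy.sub (hasDerivAt_evenQuartic α β y))
    (hw'.mono fun y hy => hy.sub (hasDerivAt_deriv_evenQuartic α β y))
    (hode.mono fun y hy => ?_) hp_lim hq_lim hpos (by linarith) hresidual
    (by simpa using hlim.sub hP)
  · simpa only [HasEvenExpansion, Real.rpow_ofNat] using hbigO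
  · linear_combination hy - d * (d + 1) * g y ^ n * hfactor y

end NormalizedEquation

section ErrorFunction

theorem kap_pos : 0 < kap := by
  unfold kap
  positivity

theorem abs_exp_neg_sub_le {s : ℝ} (h₀ : 0 ≤ s) (h₁ : s ≤ 1) :
    |Real.exp (-s) - (1 - s + s ^ 2 / 2)| ≤ s ^ 3 := by
  have hsum : ∑ m ∈ Finset.range 3, (-s) ^ m / m.factorial = 1 - s + s ^ 2 / 2 := by
    norm_num [Finset.sum_range_succ, Nat.factorial]
    ring
  rw [← hsum]
  calc _ ≤ |-s| ^ 3 * ((3 : ℕ).succ / ((3 : ℕ).factorial * (3 : ℕ))) :=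
        Real.exp_bound (by rwa [abs_neg, abs_of_nonneg h₀]) (by norm_num)
    _ ≤ s ^ 3 := by
        rw [abs_neg, abs_of_nonneg h₀]
        exact mul_le_of_le_one_right (by positivity) (by norm_num [Nat.factorial])

theorem integral_taylor_exp_neg_sq (x : ℝ) :
    ∫ σ in (0 : ℝ)..x, (1 - σ ^ 2 + (σ ^ 2) ^ 2 / 2) = x - x ^ 3 / 3 + x ^ 5 / 10 := by
  have hderiv (t : ℝ) : HasDerivAt (fun t : ℝ => t - t ^ 3 / 3 + t ^ 5 / 10)
      (1 - t ^ 2 + (t ^ 2) ^ 2 / 2) t := by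
    refine (((hasDerivAt_id t).sub ((hasDerivAt_pow 3 t).div_const 3)).add
      ((hasDerivAt_pow 5 t).div_const 10)).congr_deriv ?_
    push_cast
    ring
  rw [intervalIntegral.integral_eq_sub_of_hasDerivAt (fun t _ => hderiv t)
    (Continuous.intervalIntegrable (by fun_prop) _ _)]
  ring

theorem abs_integral_exp_neg_sq_sub_le {x : ℝ} (h₀ : 0 ≤ x) (h₁ : x ≤ 1) :
    |(∫ σ in (0 : ℝ)..x, Real.exp (-σ ^ 2)) - (x - x ^ 3 / 3 + x ^ 5 / 10)| ≤ x ^ 7 := by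
  rw [← integral_taylor_exp_neg_sq, ← intervalIntegral.integral_sub
    (Continuous.intervalIntegrable (by fun_prop) _ _)
    (Continuous.intervalIntegrable (by fun_prop) _ _)]
  have hpointwise : ∀ σ ∈ Set.uIoc 0 x,
      ‖Real.exp (-σ ^ 2) - (1 - σ ^ 2 + (σ ^ 2) ^ 2 / 2)‖ ≤ x ^ 6 := by
    intro σ hσ
    rw [uIoc_of_le h₀] at hσ
    calc _ ≤ (σ ^ 2) ^ 3 :=
          abs_exp_neg_sub_le (sq_nonneg σ) (pow_le_one₀ hσ.1.le (hσ.2.trans h₁))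
      _ = σ ^ 6 := by ring
      _ ≤ x ^ 6 := pow_le_pow_left₀ hσ.1.le hσ.2 6
  calc _ ≤ x ^ 6 * |x - 0| := intervalIntegral.norm_integral_le_of_norm_le_const hpointwise
    _ = x ^ 7 := by rw [sub_zero, abs_of_nonneg h₀]; ring

theorem hasEvenExpansion_mu1_div :
    HasEvenExpansion (fun y => mu1 y / (kap * y)) (-1 / 12) (1 / 160) := by
  refine IsBigO.of_bound 1 ?_
  filter_upwards [Ioc_mem_nhdsGT one_pos] with y hy
  have hy₀ : 0 < y := hy.1
  have hint := abs_integral_exp_neg_sq_sub_le (x := y / 2) (by positivity) (by linarith [hy.2])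
  have hscale : mu1 y / (kap * y) - evenQuartic (-1 / 12) (1 / 160) y =
      2 / y * ((∫ σ in (0 : ℝ)..(y / 2), Real.exp (-σ ^ 2)) -
        (y / 2 - (y / 2) ^ 3 / 3 + (y / 2) ^ 5 / 10)) := by
    unfold mu1 kap evenQuartic
    field_simp
    ring
  rw [hscale, Real.norm_eq_abs, Real.norm_eq_abs, abs_mul, abs_of_pos (by positivity : 0 < 2 / y),
    abs_of_pos (by positivity : 0 < y ^ 6)]
  calc _ ≤ 2 / y * (y / 2) ^ 7 := by gcongr
    _ = 1 / 64 * y ^ 6 := by field_simp; norm_num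
    _ ≤ 1 * y ^ 6 := by gcongr; norm_num

end ErrorFunction

section Coefficients

/-- The coefficient of `y²` in the expansion of the normalized profile `y ^ δ μ₂ / λ`, obtained by
matching the `y²` terms of its differential equation (`profileCoeffTwo_balance`). -/
noncomputable def profileCoeffTwo (n : ℕ) : ℝ :=
  n * (2 * n ^ 2 - n + 8) / (12 * (n - 1) * (2 * n ^ 2 + 7 * n + 12))

/-- The coefficient of `y⁴` in the expansion of the normalized profile `y ^ δ μ₂ / λ`, obtained by
matching the `y⁴` terms of its differential equation (`profileCoeffFour_balance`). -/
noncomputable def profileCoeffFour (n : ℕ) : ℝ :=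
  n * (8 * n ^ 7 - 292 * n ^ 6 - 1594 * n ^ 5 + 145 * n ^ 4 + 1930 * n ^ 3 + 7984 * n ^ 2
    - 7488 * n + 12672) /
    (1440 * (n - 1) ^ 2 * (2 * n ^ 2 + 7 * n + 12) ^ 2 * (2 * n ^ 2 + n + 30))

variable {n : ℕ}

theorem sub_one_pos_of_two_le (hn : 2 ≤ n) : (0 : ℝ) < n - 1 := by
  have : (2 : ℝ) ≤ n := by exact_mod_cast hn
  linarith

theorem profileCoeffTwo_pos (hn : 2 ≤ n) : 0 < profileCoeffTwo n := by
  have hn' : (2 : ℝ) ≤ n := by exact_mod_cast hn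
  have hn₁ := sub_one_pos_of_two_le hn
  have hquad : (0 : ℝ) < 2 * n ^ 2 - n + 8 := by nlinarith
  unfold profileCoeffTwo
  positivity

theorem profileCoeffFour_numerator_ne_zero (m : ℤ) :
    8 * m ^ 7 - 292 * m ^ 6 - 1594 * m ^ 5 + 145 * m ^ 4 + 1930 * m ^ 3 + 7984 * m ^ 2
      - 7488 * m + 12672 ≠ 0 := by
  intro hroot
  have hmod := congrArg (Int.cast : ℤ → ZMod 17) hroot
  push_cast at hmod
  have hno_root : ∀ x : ZMod 17, 8 * x ^ 7 - 292 * x ^ 6 - 1594 * x ^ 5 + 145 * x ^ 4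
      + 1930 * x ^ 3 + 7984 * x ^ 2 - 7488 * x + 12672 ≠ 0 := by decide
  exact hno_root m hmod

theorem profileCoeffFour_ne_zero (hn : 2 ≤ n) : profileCoeffFour n ≠ 0 := by
  have hn₁ := sub_one_pos_of_two_le hn
  have hn₀ : (n : ℝ) ≠ 0 := by positivity
  refine div_ne_zero (mul_ne_zero hn₀ ?_) (by positivity)
  exact_mod_cast profileCoeffFour_numerator_ne_zero n

theorem profileCoeffTwo_balance (hn : 2 ≤ n) :
    (2 - del n) * (1 - del n) * profileCoeffTwo n + (eps n - del n / 2) =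
      del n * (del n + 1) * (n * (-1 / 12 + profileCoeffTwo n)) := by
  have hn₁ := (sub_one_pos_of_two_le hn).ne'
  unfold profileCoeffTwo del eps
  field_simp
  ring

theorem profileCoeffFour_balance (hn : 2 ≤ n) :
    (4 - del n) * (3 - del n) * profileCoeffFour n +
        (eps n - del n / 2 + 1) * profileCoeffTwo n =
      del n * (del n + 1) * (n * (1 / 160 + -1 / 12 * profileCoeffTwo n + profileCoeffFour n) +
        n * (n - 1) / 2 * (-1 / 12 + profileCoeffTwo n) ^ 2) := by
  have hn₁ := (sub_one_pos_of_two_le hn).ne'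
  unfold profileCoeffFour profileCoeffTwo del eps
  field_simp
  ring

theorem lam0_eq (hn : 2 ≤ n) : lam0 n = lam n * profileCoeffTwo n := by
  have hn₁ := sub_one_pos_of_two_le hn
  have hk := kap_pos
  have hden : ((n : ℝ) - 1) * del n * (del n + 1) + 2 * (2 * del n - 1) =
      (2 * n ^ 2 + 7 * n + 12) / (n - 1) := by
    unfold del
    field_simp
    ring
  unfold lam0 kap3 profileCoeffTwo
  rw [hden]
  unfold del eps
  field_simp
  ring

theorem del_pos (hn : 2 ≤ n) : 0 < del n :=
  div_pos (by positivity) (sub_one_pos_of_two_le hn)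

theorem lam_pos (hn : 2 ≤ n) : 0 < lam n := by
  have hk := kap_pos
  have hd := del_pos hn
  unfold lam
  positivity

theorem two_kap_lam_pow (hn : 2 ≤ n) : (2 * kap * lam n) ^ n = del n * (del n + 1) * lam n := by
  have hk := kap_pos
  have hd := del_pos hn
  have hn₁ := (sub_one_pos_of_two_le hn).ne'
  have hlam : lam n ^ (n - 1) = del n * (del n + 1) / (2 * kap) ^ n := by
    rw [lam, ← Real.rpow_natCast, ← Real.rpow_mul (by positivity), Nat.cast_sub (by omega),
      Nat.cast_one, one_div_mul_cancel hn₁, Real.rpow_one]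
  rw [mul_pow, ← pow_sub_one_mul (by omega) (lam n), hlam]
  field_simp

theorem six_sub_del_mul_lt (hn : 2 ≤ n) :
    (6 - del n) * (5 - del n) < n * (del n * (del n + 1)) := by
  have hn₁ := sub_one_pos_of_two_le hn
  unfold del
  rw [← sub_pos]
  have : (n * ((n + 2) / (n - 1) * ((n + 2) / (n - 1) + 1)) -
      (6 - (n + 2) / (n - 1)) * (5 - (n + 2) / (n - 1)) : ℝ) =
      (2 * n ^ 2 - 13 * n + 56) / (n - 1) := by
    field_simp
    ring
  rw [this]
  exact div_pos (by nlinarith [sq_nonneg ((n : ℝ) - 3)]) hn₁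

end Coefficients

section NormalizedProfile

/-- The profile divided by its leading term `λ y ^ (-δ)` at the origin, so that an admissible
profile has normalized limit `1` as `y → 0⁺`. -/
noncomputable def normalizedProfile (n : ℕ) (μ : ℝ → ℝ) (y : ℝ) : ℝ :=
  y ^ del n * μ y / lam n

theorem hasDerivAt_rpow_mul {f : ℝ → ℝ} {f' y : ℝ} (d : ℝ) (hy : 0 < y)
    (hf : HasDerivAt f f' y) :
    HasDerivAt (fun t => t ^ d * f t) (y ^ d * (f' + d / y * f y)) y := by
  refine ((Real.hasDerivAt_rpow_const (Or.inl hy.ne')).mul hf).congr_deriv ?_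
  rw [Real.rpow_sub_one hy.ne']
  ring

variable {n : ℕ} {μ : ℝ → ℝ} {y : ℝ}

theorem hasDerivAt_normalizedProfile (n : ℕ) (hy : 0 < y) (hμ : DifferentiableAt ℝ μ y) :
    HasDerivAt (normalizedProfile n μ)
      (y ^ del n * (deriv μ y + del n / y * μ y) / lam n) y :=
  (hasDerivAt_rpow_mul (del n) hy hμ.hasDerivAt).div_const (lam n)

theorem hasDerivAt_deriv_normalizedProfile (n : ℕ) (hy : 0 < y) (hμ : ContDiffAt ℝ 2 μ y) :
    HasDerivAt (fun t => t ^ del n * (deriv μ t + del n / t * μ t) / lam n)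
      (y ^ del n * (deriv (deriv μ) y + 2 * del n / y * deriv μ y +
        del n * (del n - 1) / y ^ 2 * μ y) / lam n) y := by
  have hderiv : HasDerivAt (deriv μ) (deriv (deriv μ) y) y :=
    ((hμ.derivWithin le_rfl).differentiableAt one_ne_zero).hasDerivAt
  have hdiv : HasDerivAt (fun t => del n / t) (-del n / y ^ 2) y := by
    simpa [div_eq_mul_inv] using (hasDerivAt_inv hy.ne').const_mul (del n)
  refine ((hasDerivAt_rpow_mul (del n) hy (hderiv.add (hdiv.mul
    (hμ.differentiableAt two_ne_zero).hasDerivAt))).div_const (lam n)).congr_deriv ?_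
  simp only [Pi.add_apply, Pi.mul_apply]
  ring

theorem rpow_del_pow (hn : 2 ≤ n) (hy : 0 < y) : (y ^ del n) ^ n = y ^ (n + 2) * y ^ del n := by
  have hn₁ := (sub_one_pos_of_two_le hn).ne'
  have hexp : del n * n = ((n + 2 : ℕ) : ℝ) + del n := by
    unfold del
    push_cast
    field_simp
    ring
  rw [← Real.rpow_mul_natCast hy.le, hexp, Real.rpow_add hy, Real.rpow_natCast]

theorem normalizedProfile_reaction (hn : 2 ≤ n) (μ : ℝ → ℝ) (hy : 0 < y) :
    del n * (del n + 1) * (mu1 y / (kap * y) * normalizedProfile n μ y) ^ n =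
      y ^ del n * y ^ 2 * (2 * mu1 y * μ y) ^ n / lam n := by
  have hk := kap_pos
  have hd := del_pos hn
  have hl := lam_pos hn
  have hbase : mu1 y / (kap * y) * normalizedProfile n μ y =
      y ^ del n * (2 * mu1 y * μ y) / (y * (2 * kap * lam n)) := by
    unfold normalizedProfile
    field_simp
  rw [hbase, div_pow, mul_pow (y ^ del n), mul_pow y, rpow_del_pow hn hy, two_kap_lam_pow hn]
  field_simp
  ring

theorem normalizedProfile_ode (hn : 2 ≤ n) (hy : 0 < y)
    (hode : deriv (deriv μ) y + y / 2 * deriv μ y + eps n * μ y = (2 * mu1 y * μ y) ^ n) :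
    y ^ 2 * (y ^ del n * (deriv (deriv μ) y + 2 * del n / y * deriv μ y +
        del n * (del n - 1) / y ^ 2 * μ y) / lam n) +
      y * (y ^ 2 / 2 - 2 * del n) * (y ^ del n * (deriv μ y + del n / y * μ y) / lam n) +
      (del n * (del n + 1) + (eps n - del n / 2) * y ^ 2) * normalizedProfile n μ y =
      del n * (del n + 1) * (mu1 y / (kap * y) * normalizedProfile n μ y) ^ n := by
  rw [normalizedProfile_reaction hn μ hy, ← hode, normalizedProfile]
  field_simp
  ring

theorem tendsto_normalizedProfile (hn : 2 ≤ n)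
    (hlim : Tendsto (fun y => y ^ del n * μ y) (𝓝[>] 0) (𝓝 (lam n))) :
    Tendsto (normalizedProfile n μ) (𝓝[>] 0) (𝓝 1) :=
  div_self (lam_pos hn).ne' ▸ hlim.div_const (lam n)

theorem hasEvenExpansion_normalizedProfile (hn : 2 ≤ n)
    (hμ : ∀ᶠ y in 𝓝[>] 0, ContDiffAt ℝ 2 μ y)
    (hode : ∀ᶠ y in 𝓝[>] 0,
      deriv (deriv μ) y + y / 2 * deriv μ y + eps n * μ y = (2 * mu1 y * μ y) ^ n)
    (hlim : Tendsto (fun y => y ^ del n * μ y) (𝓝[>] 0) (𝓝 (lam n))) :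
    HasEvenExpansion (normalizedProfile n μ) (profileCoeffTwo n) (profileCoeffFour n) := by
  have hpos : ∀ᶠ y : ℝ in 𝓝[>] 0, 0 < y := eventually_mem_nhdsWithin
  have hd := del_pos hn
  exact hasEvenExpansion_of_normalized_ode hasEvenExpansion_mu1_div
    ((hpos.and hμ).mono fun y hy =>
      hasDerivAt_normalizedProfile n hy.1 (hy.2.differentiableAt two_ne_zero))
    ((hpos.and hμ).mono fun y hy => hasDerivAt_deriv_normalizedProfile n hy.1 hy.2)
    ((hpos.and hode).mono fun y hy => normalizedProfile_ode hn hy.1 hy.2)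
    (tendsto_normalizedProfile hn hlim)
    (mul_pos (sub_one_pos_of_two_le hn) (by positivity)) (six_sub_del_mul_lt hn)
    (profileCoeffTwo_balance hn) (profileCoeffFour_balance hn)

theorem rpow_sub_two_mul_profile_remainder (hn : 2 ≤ n) (μ : ℝ → ℝ) (hy : 0 < y) :
    y ^ (del n - 2) * (μ y - lam n * y ^ (-(del n))) =
      lam n * ((normalizedProfile n μ y - 1) / y ^ 2) := by
  have hl := (lam_pos hn).ne'
  rw [normalizedProfile, Real.rpow_sub hy, Real.rpow_neg hy.le, Real.rpow_ofNat]
  field_simp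

theorem rpow_sub_four_mul_profile_remainder (hn : 2 ≤ n) (μ : ℝ → ℝ) (hy : 0 < y) :
    y ^ (del n - 4) * (μ y - lam n * y ^ (-(del n)) - lam0 n * y ^ (2 - del n)) =
      lam n * ((normalizedProfile n μ y - 1 - profileCoeffTwo n * y ^ 2) / y ^ 4) := by
  have hl := (lam_pos hn).ne'
  rw [normalizedProfile, lam0_eq hn, Real.rpow_sub hy, Real.rpow_sub hy, Real.rpow_neg hy.le,
    Real.rpow_ofNat, Real.rpow_ofNat]
  field_simp

end NormalizedProfile

theorem diffusive_profile_asymptotics_at_zero_general (n : ℕ) (hn : 2 ≤ n) (μ : ℝ → ℝ)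
    (hμ : ∀ᶠ y in 𝓝[>] 0, ContDiffAt ℝ 2 μ y)
    (hode : ∀ᶠ y in 𝓝[>] 0,
      deriv (deriv μ) y + y / 2 * deriv μ y + eps n * μ y = (2 * mu1 y * μ y) ^ n)
    (hlim : Tendsto (fun y => y ^ del n * μ y) (𝓝[>] 0) (𝓝 (lam n))) :
    (Tendsto (fun y : ℝ => y ^ (del n - 2) * (μ y - lam n * y ^ (-(del n)))) (𝓝[>] 0)
        (𝓝 (lam0 n)) ∧ 0 < lam0 n) ∧
      ∃ lam1 : ℝ, lam1 ≠ 0 ∧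
        Tendsto (fun y : ℝ => y ^ (del n - 4) *
          (μ y - lam n * y ^ (-(del n)) - lam0 n * y ^ (2 - del n))) (𝓝[>] 0) (𝓝 lam1) := by
  have hw := hasEvenExpansion_normalizedProfile hn hμ hode hlim
  have hl := lam_pos hn
  refine ⟨⟨?_, lam0_eq hn ▸ mul_pos hl (profileCoeffTwo_pos hn)⟩, lam n * profileCoeffFour n,
    mul_ne_zero hl.ne' (profileCoeffFour_ne_zero hn), ?_⟩
  · rw [lam0_eq hn]
    exact (hw.tendsto_second_coeff.const_mul (lam n)).congr' <| eventually_mem_nhdsWithin.mono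
      fun y hy => (rpow_sub_two_mul_profile_remainder hn μ hy).symm
  · exact (hw.tendsto_fourth_coeff.const_mul (lam n)).congr' <| eventually_mem_nhdsWithin.mono
      fun y hy => (rpow_sub_four_mul_profile_remainder hn μ hy).symm

/-- Asymptotics of the diffusive profile near the origin:
y^{δ−2}(μ₂(y) − λ y^{−δ}) → λ₀ > 0, and for some λ₁ ≠ 0,
y^{δ−4}(μ₂(y) − λ y^{−δ} − λ₀ y^{2−δ}) → λ₁ as y → 0⁺. -/
theorem diffusive_profile_asymptotics_at_zero (n : ℕ) (hn : 4 ≤ n)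
    (μ : ℝ → ℝ) (hμ : IsDiffusiveProfile n μ) :
    (Filter.Tendsto (fun y : ℝ => y ^ (del n - 2) * (μ y - lam n * y ^ (-(del n))))
        (nhdsWithin 0 (Set.Ioi 0)) (nhds (lam0 n)) ∧ 0 < lam0 n) ∧
    ∃ lam1 : ℝ, lam1 ≠ 0 ∧
      Filter.Tendsto (fun y : ℝ => y ^ (del n - 4) *
          (μ y - lam n * y ^ (-(del n)) - lam0 n * y ^ (2 - del n)))
        (nhdsWithin 0 (Set.Ioi 0)) (nhds lam1) := by
  obtain ⟨hC2, -, hode, hlim, -⟩ := hμ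
  exact diffusive_profile_asymptotics_at_zero_general n (by omega) μ
    (eventually_mem_nhdsWithin.mono fun y hy => hC2.contDiffAt (Ioi_mem_nhds hy))
    (eventually_mem_nhdsWithin.mono hode) hlim
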